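/- Let g: ℕ → ℕ be nondecreasing, unbounded, with g(n)/n → 0. Define the bounded density shift X over {0,1} as the set of all x ∈ {0,1}^ℤ such that every subword of x of length n contains at most g(n) occurrences of the symbol 1. Then X is a nonempty subshift that is irreducible and has left almost specification with mistake function g(n). -/

import Mathlib

open Real Filter MeasureTheory

/-- The left shift map on bi-infinite sequences. -/
def shiftMap {A : Type*} (x : ℤ → A) : ℤ → A := fun i => x (i + 1)

/-- The word of length `n` read from `x` starting at position `i`. -/
def wordAt {A : Type*} (x : ℤ → A) (i : ℤ) (n : ℕ) : List A :=
  List.ofFn (fun k : Fin n => x (i + (k : ℕ)))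

/-- A word `w` belongs to the language of a set `S` of bi-infinite sequences if it
occurs somewhere in some point of `S`. -/
def InLangS {A : Type*} (S : Set (ℤ → A)) (w : List A) : Prop :=
  ∃ x ∈ S, ∃ i : ℤ, wordAt x i w.length = w

/-- Hamming distance between two words of the same length: the number of
positions at which they differ. -/
def listHamming {A : Type*} [DecidableEq A] (v w : List A) : ℕ :=
  (List.zipWith (fun a b => if a = b then 0 else 1) v w).sum

/-- A subshift: a closed, shift-invariant set of bi-infinite sequences over a
finite (discrete) alphabet. -/
structure Subshift (A : Type*) [TopologicalSpace A] where
  carrier : Set (ℤ → A)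
  isClosed : IsClosed carrier
  invariant : ∀ x ∈ carrier, shiftMap x ∈ carrier

/-- Topological entropy of (the language of) `S`, as the infimum of
`(1/n) log |L_n(S)|` (equal to the limit by subadditivity). -/
noncomputable def langEntropy {A : Type*} (S : Set (ℤ → A)) : ℝ :=
  ⨅ n : ℕ+, Real.log ({w : List A | w.length = (n : ℕ) ∧ InLangS S w}.ncard) / (n : ℝ)

/-- The bounded density shift over `{0,1}` (here `Bool`, with `true` playing the
role of the symbol 1): all bi-infinite sequences each of whose length-`n`
subwords contains at most `g n` ones. -/
def bdsCarrier (g : ℕ → ℕ) : Set (ℤ → Bool) :=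
  {x : ℤ → Bool | ∀ (i : ℤ) (n : ℕ), (wordAt x i n).count true ≤ g n}


lemma bds_count_eq (x : ℤ → Bool) (i : ℤ) (n : ℕ) :
    (wordAt x i n).count true = ((Finset.range n).filter (fun k : ℕ => x (i + k) = true)).card := by
  induction n with
  | zero => simp [wordAt]
  | succ n ih =>
    have h : wordAt x i (n + 1) = wordAt x i n ++ [x (i + n)] := by
      unfold wordAt
      rw [List.ofFn_succ_last]
      simp
    rw [h, List.count_append, ih, Finset.range_add_one, Finset.filter_insert]
    by_cases hx : x (i + n) = true <;> simp [hx]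

lemma bds_count_mono (x y : ℤ → Bool) (i j : ℤ) (n : ℕ)
    (h : ∀ k : ℕ, k < n → y (j + k) = true → x (i + k) = true) :
    (wordAt y j n).count true ≤ (wordAt x i n).count true := by
  rw [bds_count_eq, bds_count_eq]
  apply Finset.card_le_card
  intro k hk
  simp only [Finset.mem_filter, Finset.mem_range] at hk ⊢
  exact ⟨hk.1, h k hk.1 hk.2⟩

lemma bds_count_le_card (y : ℤ → Bool) (j : ℤ) (n : ℕ) (s : Finset ℤ)
    (h : ∀ k : ℤ, y k = true → k ∈ s) : (wordAt y j n).count true ≤ s.card := by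
  rw [bds_count_eq]
  apply Finset.card_le_card_of_injOn (fun k : ℕ => j + (k : ℤ))
  · intro k hk
    simp only [Finset.coe_filter, Set.mem_setOf_eq] at hk
    exact h _ hk.2
  · intro a _ b _ hab
    simpa using hab

lemma bds_getElem (x : ℤ → Bool) (i : ℤ) (w : List Bool) (h : wordAt x i w.length = w)
    (k : ℕ) (hk : k < w.length) : x (i + k) = w[k] := by
  have h2 : (wordAt x i w.length)[k]'(by simpa [wordAt] using hk) = w[k] := by
    simp only [h]
  simpa [wordAt] using h2

lemma bds_wordAt_eq (x : ℤ → Bool) (i : ℤ) (w : List Bool)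
    (h : ∀ (k : ℕ) (hk : k < w.length), x (i + k) = w[k]) : wordAt x i w.length = w := by
  apply List.ext_getElem
  · simp [wordAt]
  · intro k h1 h2
    simpa [wordAt] using h k h2

lemma bds_zero_mem (g : ℕ → ℕ) : (fun _ => false) ∈ bdsCarrier g := by
  intro i n
  rw [bds_count_eq]
  simp

lemma bds_hamming (w : List Bool) :
    listHamming (List.replicate w.length false) w = w.count true := by
  induction w with
  | nil => simp [listHamming]
  | cons a w ih =>
    unfold listHamming at ih ⊢
    cases a <;> simp [List.replicate_succ, ih, add_comm]

lemma bds_isClosed (g : ℕ → ℕ) : IsClosed (bdsCarrier g) := by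
  have : bdsCarrier g = ⋂ (i : ℤ) (n : ℕ), (fun (x : ℤ → Bool) (k : Fin n) => x (i + (k : ℕ))) ⁻¹'
      {f : Fin n → Bool | (List.ofFn f).count true ≤ g n} := by
    ext x
    simp [bdsCarrier, wordAt]
  rw [this]
  refine isClosed_iInter fun i => isClosed_iInter fun n => ?_
  exact (isClosed_discrete _).preimage (by fun_prop)

lemma bds_irred (g : ℕ → ℕ) (hmono : Monotone g) (hunb : ∀ N : ℕ, ∃ n : ℕ, N ≤ g n)
    (u v : List Bool) (hu : InLangS (bdsCarrier g) u) (hv : InLangS (bdsCarrier g) v) :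
    ∃ z : List Bool, InLangS (bdsCarrier g) (u ++ z ++ v) := by
  obtain ⟨x, hx, i, hxi⟩ := hu
  obtain ⟨x', hx', i', hxi'⟩ := hv
  obtain ⟨N, hN⟩ := hunb (u.length + v.length)
  let y : ℤ → Bool := fun j =>
    if 0 ≤ j ∧ j < u.length then x (i + j)
    else if u.length + N ≤ j ∧ j < u.length + N + v.length then x' (i' + (j - u.length - N))
    else false
  refine ⟨List.replicate N false, y, ?_, 0, ?_⟩
  · intro j n
    by_cases hn : N ≤ n
    · refine le_trans ?_ (hN.trans (hmono hn))
      refine (bds_count_le_card y j n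
        (Finset.Ico 0 (u.length : ℤ) ∪ Finset.Ico (u.length + N : ℤ) (u.length + N + v.length))
        ?_).trans ((Finset.card_union_le _ _).trans ?_)
      · intro k hk
        simp only [Finset.mem_union, Finset.mem_Ico]
        simp only [y] at hk
        split_ifs at hk with h1 h2
        · exact Or.inl h1
        · exact Or.inr h2
      · simp
    · by_cases hj : j < u.length
      · refine le_trans (bds_count_mono x y (i + j) j n ?_) (hx (i + j) n)
        intro k hk hy
        simp only [y] at hy
        split_ifs at hy with h1 h2
        · rwa [add_assoc]
        · omega
      · refine le_trans (bds_count_mono x' y (i' + (j - u.length - N)) j n ?_) (hx' _ n)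
        intro k hk hy
        simp only [y] at hy
        split_ifs at hy with h1 h2
        · omega
        · rw [← hy]
          congr 1
          ring
  · apply bds_wordAt_eq
    intro k hk
    simp only [List.length_append, List.length_replicate] at hk
    simp only [y, zero_add, List.getElem_append, List.length_append, List.length_replicate,
      List.getElem_replicate]
    by_cases h1 : k < u.length
    · rw [if_pos (by omega), dif_pos (by omega), dif_pos h1]
      exact bds_getElem x i u hxi k h1
    · rw [if_neg (by omega)]
      by_cases h2 : k < u.length + N
      · rw [if_neg (by omega), dif_pos h2, dif_neg h1]
      · rw [if_pos (by omega), dif_neg h2]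
        rw [← bds_getElem x' i' v hxi' (k - (u.length + N)) (by omega)]
        congr 1
        omega

lemma bds_las (g : ℕ → ℕ) (w1 w2 : List Bool) (h1 : InLangS (bdsCarrier g) w1)
    (h2 : InLangS (bdsCarrier g) w2) :
    ∃ b : List Bool, b.length = w1.length ∧ InLangS (bdsCarrier g) b ∧
        listHamming b w1 ≤ g w1.length ∧ InLangS (bdsCarrier g) (b ++ w2) := by
  obtain ⟨x, hx, i, hxi⟩ := h1
  obtain ⟨x', hx', i', hxi'⟩ := h2
  refine ⟨List.replicate w1.length false, by simp, ?_, ?_, ?_⟩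
  · refine ⟨_, bds_zero_mem g, 0, ?_⟩
    apply bds_wordAt_eq
    simp
  · rw [bds_hamming]
    have := hx i w1.length
    rwa [hxi] at this
  · refine ⟨fun j => if i' ≤ j then x' j else false, ?_, i' - w1.length, ?_⟩
    · intro j n
      refine le_trans (bds_count_mono x' _ j j n ?_) (hx' j n)
      intro k hk hy
      split_ifs at hy
      exact hy
    · apply bds_wordAt_eq
      intro k hk
      simp only [List.length_append, List.length_replicate] at hk
      simp only [List.getElem_append, List.length_replicate, List.getElem_replicate]
      by_cases h : k < w1.length
      · rw [if_neg (by omega), dif_pos h]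
      · rw [if_pos (by omega), dif_neg h, ← bds_getElem x' i' w2 hxi' (k - w1.length) (by omega)]
        congr 1
        omega

/-- For `g` nondecreasing, unbounded, with `g(n)/n → 0`, the bounded density
shift is a nonempty subshift (closed and shift-invariant) that is irreducible and
has left almost specification with mistake function `g`. -/
theorem stmt15 (g : ℕ → ℕ) (hmono : Monotone g) (hunb : ∀ N : ℕ, ∃ n : ℕ, N ≤ g n)
    (hg : Filter.Tendsto (fun n : ℕ => (g n : ℝ) / (n : ℝ)) Filter.atTop (nhds 0)) :
    (bdsCarrier g).Nonempty ∧
    IsClosed (bdsCarrier g) ∧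
    (∀ x ∈ bdsCarrier g, shiftMap x ∈ bdsCarrier g) ∧
    (∀ u v : List Bool, InLangS (bdsCarrier g) u → InLangS (bdsCarrier g) v →
      ∃ z : List Bool, InLangS (bdsCarrier g) (u ++ z ++ v)) ∧
    (∀ w1 w2 : List Bool,
      InLangS (bdsCarrier g) w1 → InLangS (bdsCarrier g) w2 →
      ∃ b : List Bool, b.length = w1.length ∧ InLangS (bdsCarrier g) b ∧
        listHamming b w1 ≤ g w1.length ∧ InLangS (bdsCarrier g) (b ++ w2)) := by
  refine ⟨⟨_, bds_zero_mem g⟩, bds_isClosed g, ?_, bds_irred g hmono hunb, bds_las g⟩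
  intro x hx i n
  refine le_trans (bds_count_mono x _ (i + 1) i n ?_) (hx (i + 1) n)
  intro k _ hy
  rw [← hy]
  unfold shiftMap
  congr 1
  ring
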